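/- arXiv:2206.05208 — 8 statements merged into one kernel-verified Lean document; each statement's English description precedes it below -/
import Mathlib

section
/- Let ℓ ≥ 1 and let R_ℓ be the picture language of all one-row pictures over the alphabet {a,b} whose single row is a word in (a^{ℓ−1} b)^+. Then every tiling system ({a,b}, Γ, T, π) recognizing R_ℓ satisfies |Γ| ≥ ℓ. -/
/-- A picture over alphabet `A`: a rectangular array with at least one row
and one column. -/
structure Picture (A : Type) : Type where
  rows : ℕ
  cols : ℕ
  rows_pos : 0 < rows
  cols_pos : 0 < cols
  pix : Fin rows → Fin cols → A

namespace Picture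

/-- Pixelwise projection of a picture along a map of alphabets. -/
def map {A B : Type} (f : A → B) (p : Picture A) : Picture B :=
  ⟨p.rows, p.cols, p.rows_pos, p.cols_pos, fun i j => f (p.pix i j)⟩

/-- The pixel at (i,j) (0-based), or `none` if out of range. -/
def pget {A : Type} (p : Picture A) (i j : ℕ) : Option A :=
  if h : i < p.rows ∧ j < p.cols then some (p.pix ⟨i, h.1⟩ ⟨j, h.2⟩) else none

/-- The pixel at position (i,j) of the bordered picture of `p`, where the
border symbol `#` is `none`; row 0 and column 0 are border rows, the content
occupies rows `1..p.rows` and columns `1..p.cols`, and every other position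
is a border (`#`) position. -/
def bpix {A : Type} (p : Picture A) (i j : ℕ) : Option A :=
  if h : 1 ≤ i ∧ i ≤ p.rows ∧ 1 ≤ j ∧ j ≤ p.cols then
    some (p.pix ⟨i - 1, by omega⟩ ⟨j - 1, by omega⟩)
  else none

end Picture

/-- A `k`-tile over `A ∪ {#}`, the border symbol `#` being `none`. -/
abbrev BTile (A : Type) (k : ℕ) := Fin k → Fin k → Option A

/-- Number of rows of the bordered version of `p` used for `k`-tiles:
one border row on top and at least one at the bottom, with as many extra
border rows at the bottom as needed for `k × k` subpictures to exist. -/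
def borderRows {A : Type} (p : Picture A) (k : ℕ) : ℕ := max (p.rows + 2) k

/-- Number of columns of the bordered version of `p` used for `k`-tiles. -/
def borderCols {A : Type} (p : Picture A) (k : ℕ) : ℕ := max (p.cols + 2) k

/-- The set of `k`-tiles of the bordered picture of `p`. -/
def tilesOf {A : Type} (k : ℕ) (p : Picture A) : Set (BTile A k) :=
  { t | ∃ i j : ℕ, i + k ≤ borderRows p k ∧ j + k ≤ borderCols p k ∧
      ∀ a b : Fin k, t a b = p.bpix (i + (a : ℕ)) (j + (b : ℕ)) }

/-- The `k`-strictly-locally-testable language defined by the tile set `T`: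
all pictures each of whose `k`-tiles (of the bordered picture) is in `T`. -/
def SLTLang {A : Type} (k : ℕ) (T : Set (BTile A k)) : Set (Picture A) :=
  { p | tilesOf k p ⊆ T }

/-- The language `R_ℓ` of all one-row pictures over the alphabet `{a, b}`
(here `a = 0`, `b = 1` in `Fin 2`) whose single row spells a word of
`(a^{ℓ-1} b)^+`, i.e. the letter at 0-based column `j` is `b` exactly when
`ℓ` divides `j + 1`. -/
def Rell (ℓ : ℕ) : Set (Picture (Fin 2)) :=
  { p | p.rows = 1 ∧ (∃ m : ℕ, 1 ≤ m ∧ p.cols = ℓ * m) ∧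
      ∀ (i : Fin p.rows) (j : Fin p.cols),
        p.pix i j = if ((j : ℕ) + 1) % ℓ = 0 then 1 else 0 }

/-- Deleting columns `i+1, ..., i+d` from a picture. -/
def cutPic {A : Type} (q : Picture A) (i d : ℕ) (h : i + d < q.cols) : Picture A :=
  ⟨q.rows, q.cols - d, q.rows_pos, by omega, fun r c =>
    q.pix r ⟨if (c : ℕ) ≤ i then c else c + d, by have := c.2; split_ifs <;> omega⟩⟩

theorem cutPic_bpix_low {A : Type} (q : Picture A) (i d : ℕ) (h : i + d < q.cols) (r c : ℕ)
    (hc : c ≤ i + 1) : (cutPic q i d h).bpix r c = q.bpix r c := by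
  unfold Picture.bpix
  by_cases h1 : 1 ≤ r ∧ r ≤ q.rows ∧ 1 ≤ c
  · rw [dif_pos (show 1 ≤ r ∧ r ≤ (cutPic q i d h).rows ∧ 1 ≤ c ∧ c ≤ (cutPic q i d h).cols from
      ⟨h1.1, h1.2.1, h1.2.2, by show c ≤ q.cols - d; omega⟩),
      dif_pos ⟨h1.1, h1.2.1, h1.2.2, by omega⟩]
    simp only [cutPic]
    congr 2
    apply Fin.ext
    show (if c - 1 ≤ i then c - 1 else c - 1 + d) = c - 1
    rw [if_pos (by omega)]
  · rw [dif_neg (fun hh => h1 ⟨hh.1, hh.2.1, hh.2.2.1⟩),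
      dif_neg (fun hh => h1 ⟨hh.1, hh.2.1, hh.2.2.1⟩)]

theorem cutPic_bpix_high {A : Type} (q : Picture A) (i d : ℕ) (h : i + d < q.cols) (r c : ℕ)
    (hc : i + 1 < c) : (cutPic q i d h).bpix r c = q.bpix r (c + d) := by
  unfold Picture.bpix
  by_cases h1 : 1 ≤ r ∧ r ≤ q.rows ∧ c + d ≤ q.cols
  · rw [dif_pos (show 1 ≤ r ∧ r ≤ (cutPic q i d h).rows ∧ 1 ≤ c ∧ c ≤ (cutPic q i d h).cols from
      ⟨h1.1, h1.2.1, by omega, by show c ≤ q.cols - d; omega⟩),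
      dif_pos ⟨h1.1, h1.2.1, by omega, h1.2.2⟩]
    simp only [cutPic]
    congr 2
    apply Fin.ext
    show (if c - 1 ≤ i then c - 1 else c - 1 + d) = c + d - 1
    rw [if_neg (by omega)]
    omega
  · rw [dif_neg, dif_neg (fun hh => h1 ⟨hh.1, hh.2.1, hh.2.2.2⟩)]
    intro hh
    have h4 : c ≤ q.cols - d := hh.2.2.2
    exact h1 ⟨hh.1, hh.2.1, by omega⟩

theorem cutPic_tiles {A : Type} (q : Picture A) (i d : ℕ) (h : i + d < q.cols)
    (he : ∀ r, q.bpix r (i + 1) = q.bpix r (i + d + 1)) :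
    tilesOf 2 (cutPic q i d h) ⊆ tilesOf 2 q := by
  rintro t ⟨r, c, hr, hc, ht⟩
  have hr' : r + 2 ≤ max (q.rows + 2) 2 := hr
  have hc' : c + 2 ≤ max (q.cols - d + 2) 2 := hc
  by_cases hci : c ≤ i
  · refine ⟨r, c, hr, ?_, fun a b => ?_⟩
    · unfold borderCols; omega
    · rw [ht a b, cutPic_bpix_low]
      have := b.2; omega
  · refine ⟨r, c + d, hr, ?_, fun a b => ?_⟩
    · unfold borderCols; omega
    · rw [ht a b]
      by_cases hb : c + (b : ℕ) = i + 1
      · rw [cutPic_bpix_low _ _ _ _ _ _ (by omega), hb, he]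
        congr 1; omega
      · rw [cutPic_bpix_high _ _ _ _ _ _ (by omega)]
        congr 1; omega

/-- Every tiling system `({a,b}, Γ, T, π)` recognizing `R_ℓ` has a local
alphabet of cardinality at least `ℓ`. -/
theorem local_alphabet_lower_bound :
    ∀ ℓ : ℕ, 1 ≤ ℓ →
      ∀ (Gam : Type) (_ : Fintype Gam) (T : Set (BTile Gam 2)) (π : Gam → Fin 2),
        Picture.map π '' SLTLang 2 T = Rell ℓ → ℓ ≤ Fintype.card Gam := by
  intro ℓ hℓ Gam _ T π hT
  by_contra hlt
  push Not at hlt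
  have hw : (⟨1, ℓ, one_pos, hℓ, fun _ j => if ((j : ℕ) + 1) % ℓ = 0 then 1 else 0⟩ :
      Picture (Fin 2)) ∈ Rell ℓ := ⟨rfl, ⟨1, le_rfl, (mul_one ℓ).symm⟩, fun _ _ => rfl⟩
  rw [← hT] at hw
  obtain ⟨q, hq, hqe⟩ := hw
  have hrows : q.rows = 1 := congrArg Picture.rows hqe
  have hcols : q.cols = ℓ := congrArg Picture.cols hqe
  obtain ⟨x, y, hxy, hf⟩ := Fintype.exists_ne_map_eq_of_card_lt
    (fun j : Fin q.cols => q.pix ⟨0, q.rows_pos⟩ j) (by rw [Fintype.card_fin]; omega)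
  wlog hlt2 : x < y generalizing x y
  · exact this y x hxy.symm hf.symm (lt_of_le_of_ne (not_lt.mp hlt2) hxy.symm)
  have hlt3 : (x : ℕ) < y := hlt2
  have hy := y.2
  have h : (x : ℕ) + (y - x) < q.cols := by omega
  have hmem : cutPic q x (y - x) h ∈ SLTLang 2 T := by
    refine (cutPic_tiles q x (y - x) h ?_).trans hq
    intro r
    unfold Picture.bpix
    by_cases hr : r = 1
    · subst hr
      rw [dif_pos ⟨le_rfl, by omega, by omega, by omega⟩,
        dif_pos ⟨le_rfl, by omega, by omega, by omega⟩]
      congr 1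
      have e : (⟨(x : ℕ) + (y - x) + 1 - 1, by omega⟩ : Fin q.cols) = y := by
        apply Fin.ext; show (x : ℕ) + (y - x) + 1 - 1 = y; omega
      rw [e]
      exact hf
    · rw [dif_neg (by omega), dif_neg (by omega)]
  have hR : Picture.map π (cutPic q x (y - x) h) ∈ Rell ℓ := hT ▸ ⟨_, hmem, rfl⟩
  obtain ⟨-, ⟨m, hm, hc⟩, -⟩ := hR
  have hc' : q.cols - (y - x) = ℓ * m := hc
  have : ℓ * 1 ≤ ℓ * m := Nat.mul_le_mul_left _ hm
  omega
end

section
/- For every k ≥ 2 and every finite alphabet Σ with |Σ| > 1, the family of k-SLT picture languages over Σ is strictly included in the family of (k+1)-SLT picture languages over Σ. -/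
/-- The family of `k`-SLT picture languages over the alphabet `Sig`. -/
def SLTFamily (Sig : Type) (k : ℕ) : Set (Set (Picture Sig)) :=
  { L | ∃ T : Set (BTile Sig k), L = SLTLang k T }

section helpers

theorem bpix_isSome_of {A : Type} (p : Picture A) (i j : ℕ)
    (h : 1 ≤ i ∧ i ≤ p.rows ∧ 1 ≤ j ∧ j ≤ p.cols) : p.bpix i j ≠ none := by
  unfold Picture.bpix
  rw [dif_pos h]
  simp

theorem bpix_none_of {A : Type} (p : Picture A) (i j : ℕ)
    (h : ¬ (1 ≤ i ∧ i ≤ p.rows ∧ 1 ≤ j ∧ j ≤ p.cols)) : p.bpix i j = none := by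
  unfold Picture.bpix
  rw [dif_neg h]

/-- Square picture of side `n` from a function on (1-based) positions. -/
def sqPic {A : Type} (n : ℕ) (hn : 0 < n) (f : ℕ → ℕ → A) : Picture A :=
  ⟨n, n, hn, hn, fun i j => f (i + 1) (j + 1)⟩

theorem sqPic_bpix {A : Type} (n : ℕ) (hn : 0 < n) (f : ℕ → ℕ → A) (i j : ℕ) :
    (sqPic n hn f).bpix i j =
      if 1 ≤ i ∧ i ≤ n ∧ 1 ≤ j ∧ j ≤ n then some (f i j) else none := by
  by_cases h : 1 ≤ i ∧ i ≤ n ∧ 1 ≤ j ∧ j ≤ n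
  · rw [if_pos h]
    unfold Picture.bpix
    rw [dif_pos (show 1 ≤ i ∧ i ≤ (sqPic n hn f).rows ∧ 1 ≤ j ∧ j ≤ (sqPic n hn f).cols from h)]
    simp only [sqPic]
    rw [Nat.sub_add_cancel h.1, Nat.sub_add_cancel h.2.2.1]
  · rw [if_neg h]
    exact bpix_none_of _ _ _ h

theorem offset_exists (n k i : ℕ) (h : i + k ≤ max (n + 2) k) :
    ∃ i' d : ℕ, d ≤ 1 ∧ i = i' + d ∧ i' + (k + 1) ≤ max (n + 2) (k + 1) ∧
      (d = 1 → i' + k ≤ n + 1) := by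
  by_cases h1 : i + (k + 1) ≤ max (n + 2) (k + 1)
  · exact ⟨i, 0, by omega, by omega, h1, by omega⟩
  · exact ⟨i - 1, 1, by omega, by omega, by omega, by omega⟩

theorem content_exists (n k j : ℕ) (hk : 2 ≤ k) (hn : 0 < n)
    (h : j + (k + 1) ≤ max (n + 2) (k + 1)) :
    ∃ b : ℕ, b < k + 1 ∧ 1 ≤ j + b ∧ j + b ≤ n := by
  by_cases h0 : j = 0
  · exact ⟨1, by omega, by omega, by omega⟩
  · exact ⟨0, by omega, by omega, by omega⟩

theorem slt_incl {A : Type} (k : ℕ) (hk : 2 ≤ k) : SLTFamily A k ⊆ SLTFamily A (k + 1) := by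
  rintro L ⟨T, rfl⟩
  refine ⟨{t | ∃ q ∈ SLTLang k T, t ∈ tilesOf (k + 1) q}, ?_⟩
  apply Set.Subset.antisymm
  · intro p hp t ht
    exact ⟨p, hp, ht⟩
  · intro p hp t ht
    obtain ⟨i, j, hi, hj, hij⟩ := ht
    obtain ⟨i', d, hd, rfl, hi', hd1⟩ := offset_exists _ _ _ hi
    obtain ⟨j', e, he, rfl, hj', he1⟩ := offset_exists _ _ _ hj
    obtain ⟨q, hq, i2, j2, hi2, hj2, hq2⟩ := hp
      (show (fun a b : Fin (k + 1) => p.bpix (i' + a) (j' + b)) ∈ tilesOf (k + 1) p from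
        ⟨i', j', hi', hj', fun _ _ => rfl⟩)
    have key : ∀ a b : ℕ, a < k + 1 → b < k + 1 →
        p.bpix (i' + a) (j' + b) = q.bpix (i2 + a) (j2 + b) :=
      fun a b ha hb => hq2 ⟨a, ha⟩ ⟨b, hb⟩
    unfold borderRows at hi2
    unfold borderCols at hj2
    apply hq
    refine ⟨i2 + d, j2 + e, ?_, ?_, ?_⟩
    · unfold borderRows
      by_contra hcon
      have hd' : d = 1 := by omega
      have := hd1 hd'
      obtain ⟨b, hb, hb1, hb2⟩ := content_exists _ _ _ hk p.cols_pos hj'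
      refine bpix_isSome_of p (i' + (k - 1)) (j' + b) (by omega) ?_
      rw [key _ _ (by omega) hb]
      exact bpix_none_of _ _ _ (by omega)
    · unfold borderCols
      by_contra hcon
      have he' : e = 1 := by omega
      have := he1 he'
      obtain ⟨b, hb, hb1, hb2⟩ := content_exists _ _ _ hk p.rows_pos hi'
      refine bpix_isSome_of p (i' + b) (j' + (k - 1)) (by omega) ?_
      rw [key _ _ hb (by omega)]
      exact bpix_none_of _ _ _ (by omega)
    · intro a b
      rw [hij, add_assoc, add_assoc, key _ _ (by omega) (by omega), ← add_assoc, ← add_assoc]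

theorem slt_strict {A : Type} (k : ℕ) (hk : 2 ≤ k) (x y : A) (hxy : x ≠ y) :
    ¬ SLTFamily A (k + 1) ⊆ SLTFamily A k := by
  classical
  intro hsub
  let T : Set (BTile A (k + 1)) :=
    {t | ¬ (t 0 0 = some y ∧ t (Fin.last k) (Fin.last k) = some y)}
  obtain ⟨S, hS⟩ := hsub (show SLTLang (k + 1) T ∈ SLTFamily A (k + 1) from ⟨T, rfl⟩)
  let p1 : Picture A := sqPic (k + 1) (by omega) (fun i j => if i = 1 ∧ j = 1 then y else x)
  let p2 : Picture A :=
    sqPic (k + 1) (by omega) (fun i j => if i = k + 1 ∧ j = k + 1 then y else x)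
  let p : Picture A := sqPic (k + 1) (by omega)
    (fun i j => if (i = 1 ∧ j = 1) ∨ (i = k + 1 ∧ j = k + 1) then y else x)
  have h1 : p1 ∈ SLTLang k S := by
    rw [← hS]
    rintro t ⟨i, j, -, -, h⟩ ⟨ha, hb⟩
    rw [h, sqPic_bpix] at ha hb
    simp only [Fin.val_zero, Fin.val_last] at ha hb
    split_ifs at ha hb <;> simp_all <;> omega
  have h2 : p2 ∈ SLTLang k S := by
    rw [← hS]
    rintro t ⟨i, j, -, -, h⟩ ⟨ha, hb⟩
    rw [h, sqPic_bpix] at ha hb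
    simp only [Fin.val_zero, Fin.val_last] at ha hb
    split_ifs at ha hb <;> simp_all <;> omega
  have h3 : p ∈ SLTLang k S := by
    rintro t ⟨i, j, hi, hj, h⟩
    by_cases hi1 : i ≤ 1
    · refine h1 ⟨i, j, hi, hj, fun a b => ?_⟩
      rw [h, sqPic_bpix, sqPic_bpix]
      have : ¬ (i + (a : ℕ) = k + 1) := by omega
      simp [this]
    · refine h2 ⟨i, j, hi, hj, fun a b => ?_⟩
      rw [h, sqPic_bpix, sqPic_bpix]
      have : ¬ (i + (a : ℕ) = 1) := by omega
      simp only [this, false_and, false_or]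
  rw [← hS] at h3
  refine h3 (show (fun a b : Fin (k + 1) => p.bpix (1 + a) (1 + b)) ∈ tilesOf (k + 1) p from
    ⟨1, 1, ?_, ?_, fun _ _ => rfl⟩) ⟨?_, ?_⟩
  · simp only [borderRows, p, sqPic]; omega
  · simp only [borderCols, p, sqPic]; omega
  · simp only [p]
    rw [sqPic_bpix]
    simp
  · simp only [p]
    rw [sqPic_bpix]
    simp [add_comm]

end helpers

/-- For every `k ≥ 2` and finite alphabet with more than one letter, the
family of `k`-SLT picture languages is strictly included in the family of
`(k+1)`-SLT picture languages. -/
theorem slt_hierarchy :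
    ∀ k : ℕ, 2 ≤ k →
      ∀ (Sig : Type) (_ : Fintype Sig), 1 < Fintype.card Sig →
        SLTFamily Sig k ⊂ SLTFamily Sig (k + 1) := by
  intro k hk Sig _ hcard
  obtain ⟨x, y, hxy⟩ := Fintype.one_lt_card_iff.mp hcard
  exact ⟨slt_incl k hk, slt_strict k hk x y hxy⟩
end

section
/- For every k ≥ 2, the family of picture languages recognized by k-tiling systems coincides with the family REC of picture languages recognized by (ordinary, 2-tile) tiling systems. -/
/-- The family of picture languages over `Sig` recognized by `k`-tiling
systems (with a finite local alphabet). -/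
def kRec (Sig : Type) (k : ℕ) : Set (Set (Picture Sig)) :=
  { R | ∃ (Gam : Type) (_ : Fintype Gam) (T : Set (BTile Gam k)) (π : Gam → Sig),
      R = Picture.map π '' SLTLang k T }

theorem bpix_ne_none {A : Type} (p : Picture A) (i j : ℕ) :
    p.bpix i j ≠ none ↔ (1 ≤ i ∧ i ≤ p.rows ∧ 1 ≤ j ∧ j ≤ p.cols) := by
  unfold Picture.bpix
  split <;> simp_all

theorem bpix_eq_none {A : Type} (p : Picture A) (i j : ℕ) :
    p.bpix i j = none ↔ ¬ (1 ≤ i ∧ i ≤ p.rows ∧ 1 ≤ j ∧ j ≤ p.cols) := by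
  rw [← bpix_ne_none, not_not]

theorem bpix_map {A B : Type} (f : A → B) (p : Picture A) (i j : ℕ) :
    (p.map f).bpix i j = (p.bpix i j).map f := by
  unfold Picture.bpix Picture.map
  dsimp only
  split <;> rfl

theorem mem_SLT {A : Type} (k : ℕ) (T : Set (BTile A k)) (p : Picture A) :
    p ∈ SLTLang k T ↔ ∀ i j : ℕ, i + k ≤ borderRows p k → j + k ≤ borderCols p k →
      (fun a b : Fin k => p.bpix (i + (a : ℕ)) (j + (b : ℕ))) ∈ T := by
  constructor
  · intro h i j hi hj
    exact h ⟨i, j, hi, hj, fun _ _ => rfl⟩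
  · rintro h t ⟨i, j, hi, hj, ht⟩
    have : t = (fun a b : Fin k => p.bpix (i + (a : ℕ)) (j + (b : ℕ))) := by
      funext a b; exact ht a b
    rw [this]; exact h i j hi hj

/-- `k`-tiles all of whose 2-subtiles are in `T` or entirely made of borders. -/
def upTiles {A : Type} (k : ℕ) (T : Set (BTile A 2)) : Set (BTile A k) :=
  { t | ∀ (i j : ℕ) (hi : i + 2 ≤ k) (hj : j + 2 ≤ k),
      (fun a b : Fin 2 => t ⟨i + a, by omega⟩ ⟨j + b, by omega⟩) ∈ T ∨
      ∀ a b : Fin 2, t ⟨i + a, by omega⟩ ⟨j + b, by omega⟩ = none }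

theorem SLT_upTiles {A : Type} (k : ℕ) (hk : 2 ≤ k) (T : Set (BTile A 2)) :
    SLTLang k (upTiles k T) = SLTLang 2 T := by
  ext p
  rw [mem_SLT, mem_SLT]
  have hr := p.rows_pos
  have hc := p.cols_pos
  unfold borderRows borderCols
  constructor
  · intro h i j hi hj
    obtain ⟨i', a, rfl, hi', ha⟩ : ∃ i' a, i = i' + a ∧ i' + k ≤ max (p.rows + 2) k ∧ a + 2 ≤ k := by
      by_cases h1 : i + k ≤ max (p.rows + 2) k
      · exact ⟨i, 0, by omega, h1, by omega⟩
      · exact ⟨max (p.rows + 2) k - k, i - (max (p.rows + 2) k - k), by omega, by omega, by omega⟩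
    obtain ⟨j', b, rfl, hj', hb⟩ : ∃ j' b, j = j' + b ∧ j' + k ≤ max (p.cols + 2) k ∧ b + 2 ≤ k := by
      by_cases h1 : j + k ≤ max (p.cols + 2) k
      · exact ⟨j, 0, by omega, h1, by omega⟩
      · exact ⟨max (p.cols + 2) k - k, j - (max (p.cols + 2) k - k), by omega, by omega, by omega⟩
    rcases h i' j' hi' hj' a b ha hb with h2 | h2
    · simpa only [add_assoc] using h2
    · exfalso
      have hx : ∃ x : Fin 2, 1 ≤ i' + (a + x) ∧ i' + (a + x) ≤ p.rows := by
        by_cases h0 : i' + a = 0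
        · exact ⟨1, by simp; omega, by simp; omega⟩
        · exact ⟨0, by simp; omega, by simp; omega⟩
      have hy : ∃ x : Fin 2, 1 ≤ j' + (b + x) ∧ j' + (b + x) ≤ p.cols := by
        by_cases h0 : j' + b = 0
        · exact ⟨1, by simp; omega, by simp; omega⟩
        · exact ⟨0, by simp; omega, by simp; omega⟩
      obtain ⟨x, hx1, hx2⟩ := hx
      obtain ⟨y, hy1, hy2⟩ := hy
      exact (bpix_eq_none _ _ _).1 (h2 x y) ⟨hx1, hx2, hy1, hy2⟩
  · intro h i j hi hj a b ha hb
    by_cases hin : i + a ≤ p.rows ∧ j + b ≤ p.cols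
    · left
      have := h (i + a) (j + b) (by omega) (by omega)
      simpa only [add_assoc] using this
    · right
      intro x y
      refine (bpix_eq_none _ _ _).2 ?_
      dsimp only
      omega

/-- Each pixel is decorated with the `k × k` window having it as top left corner. -/
def decor {A : Type} (k : ℕ) (q : Picture A) : Picture (A × BTile A k) :=
  ⟨q.rows, q.cols, q.rows_pos, q.cols_pos, fun i j =>
    (q.pix i j, fun a b => q.bpix (i + 1 + a) (j + 1 + b))⟩

theorem bpix_decor {A : Type} (k : ℕ) (q : Picture A) (i j : ℕ) :
    (decor k q).bpix i j =
      (q.bpix i j).map (fun g => (g, fun a b : Fin k => q.bpix (i + (a : ℕ)) (j + (b : ℕ)))) := by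
  unfold Picture.bpix
  by_cases h : 1 ≤ i ∧ i ≤ q.rows ∧ 1 ≤ j ∧ j ≤ q.cols
  · rw [dif_pos h, dif_pos (show 1 ≤ i ∧ i ≤ (decor k q).rows ∧ 1 ≤ j ∧ j ≤ (decor k q).cols from h)]
    have h1 : i - 1 + 1 = i := by omega
    have h2 : j - 1 + 1 = j := by omega
    simp only [decor, Option.map_some, h1, h2]
    rfl
  · rw [dif_neg h, dif_neg (show ¬ (1 ≤ i ∧ i ≤ (decor k q).rows ∧ 1 ≤ j ∧ j ≤ (decor k q).cols) from h)]
    rfl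

/-- 2-tiles occurring in decorated pictures of the language. -/
def downTiles {A : Type} (k : ℕ) (T : Set (BTile A k)) : Set (BTile (A × BTile A k) 2) :=
  { s | ∃ q ∈ SLTLang k T, s ∈ tilesOf 2 (decor k q) }

theorem decor_mem {A : Type} (k : ℕ) (T : Set (BTile A k)) (q : Picture A)
    (hq : q ∈ SLTLang k T) : decor k q ∈ SLTLang 2 (downTiles k T) :=
  fun _ hs => ⟨q, hq, hs⟩

/-- Each 2-window of `P` is matched by one of a decorated picture. -/
theorem down_match {A : Type} (k : ℕ) (T : Set (BTile A k))
    (P : Picture (A × BTile A k)) (hP : P ∈ SLTLang 2 (downTiles k T))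
    (i j : ℕ) (hi : i ≤ P.rows) (hj : j ≤ P.cols) :
    ∃ q ∈ SLTLang k T, ∃ i0 j0, i0 ≤ q.rows ∧ j0 ≤ q.cols ∧
      ∀ c d : ℕ, c < 2 → d < 2 →
        P.bpix (i + c) (j + d) = (decor k q).bpix (i0 + c) (j0 + d) := by
  rw [mem_SLT] at hP
  obtain ⟨q, hq, i0, j0, h1, h2, h3⟩ := hP i j (by unfold borderRows; omega) (by unfold borderCols; omega)
  have hqr := q.rows_pos
  have hqc := q.cols_pos
  refine ⟨q, hq, i0, j0, ?_, ?_, ?_⟩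
  · have : i0 + 2 ≤ max (q.rows + 2) 2 := h1
    omega
  · have : j0 + 2 ≤ max (q.cols + 2) 2 := h2
    omega
  · intro c d hc hd
    exact h3 ⟨c, hc⟩ ⟨d, hd⟩

theorem decor_some {A : Type} (k : ℕ) (q : Picture A) (i j : ℕ) (w : A × BTile A k)
    (h : (decor k q).bpix i j = some w) :
    q.bpix i j = some w.1 ∧ ∀ a b : Fin k, w.2 a b = q.bpix (i + a) (j + b) := by
  rw [bpix_decor, Option.map_eq_some_iff] at h
  obtain ⟨g, hg, rfl⟩ := h
  exact ⟨hg, fun _ _ => rfl⟩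

theorem window_eq {A : Type} (k : ℕ) (T : Set (BTile A k))
    (P : Picture (A × BTile A k)) (hP : P ∈ SLTLang 2 (downTiles k T)) (n : ℕ) :
    ∀ (a b : ℕ) (_ : a + b = n) (ha : a < k) (hb : b < k) (i j : ℕ) (w : A × BTile A k),
      P.bpix i j = some w →
      w.2 ⟨a, ha⟩ ⟨b, hb⟩ = (P.map Prod.fst).bpix (i + a) (j + b) := by
  induction n with
  | zero =>
    intro a b hab ha hb i j w hw
    obtain rfl : a = 0 := by omega
    obtain rfl : b = 0 := by omega
    have hin := (bpix_ne_none P i j).1 (by simp [hw])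
    obtain ⟨q, hq, i0, j0, h1, h2, h3⟩ := down_match k T P hP i j (by omega) (by omega)
    have h00 := h3 0 0 (by omega) (by omega)
    simp only [add_zero, hw] at h00
    obtain ⟨e1, e2⟩ := decor_some k q _ _ w h00.symm
    rw [e2, bpix_map]
    simp [hw, e1]
  | succ n ih =>
    intro a b hab ha hb i j w hw
    have hin := (bpix_ne_none P i j).1 (by simp [hw])
    obtain ⟨q, hq, i0, j0, h1, h2, h3⟩ := down_match k T P hP i j (by omega) (by omega)
    have h00 := h3 0 0 (by omega) (by omega)
    simp only [add_zero, hw] at h00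
    obtain ⟨e1, e2⟩ := decor_some k q _ _ w h00.symm
    have hq00 := (bpix_ne_none q i0 j0).1 (by simp [e1])
    rw [e2]
    rcases a with _ | a
    · obtain ⟨b, rfl⟩ : ∃ b', b = b' + 1 := ⟨b - 1, by omega⟩
      have h01 := h3 0 1 (by omega) (by omega)
      simp only [add_zero] at h01
      cases hw' : P.bpix i (j + 1) with
      | none =>
        rw [hw', eq_comm, bpix_decor, Option.map_eq_none_iff, bpix_eq_none] at h01
        rw [bpix_eq_none] at hw'
        rw [(bpix_eq_none _ _ _).2 (by dsimp only; omega), bpix_map,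
          (bpix_eq_none _ _ _).2 (by omega)]
        rfl
      | some w' =>
        rw [hw'] at h01
        obtain ⟨f1, f2⟩ := decor_some k q _ _ w' h01.symm
        have := ih 0 b (by omega) (by omega) (by omega) i (j + 1) w' hw'
        rw [f2] at this
        dsimp only at this ⊢
        rw [show j0 + (b + 1) = j0 + 1 + b by omega, show j + (b + 1) = j + 1 + b by omega]
        exact this
    · have h01 := h3 1 0 (by omega) (by omega)
      simp only [add_zero] at h01
      cases hw' : P.bpix (i + 1) j with
      | none =>
        rw [hw', eq_comm, bpix_decor, Option.map_eq_none_iff, bpix_eq_none] at h01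
        rw [bpix_eq_none] at hw'
        rw [(bpix_eq_none _ _ _).2 (by dsimp only; omega), bpix_map,
          (bpix_eq_none _ _ _).2 (by omega)]
        rfl
      | some w' =>
        rw [hw'] at h01
        obtain ⟨f1, f2⟩ := decor_some k q _ _ w' h01.symm
        have := ih a b (by omega) (by omega) (by omega) (i + 1) j w' hw'
        rw [f2] at this
        dsimp only at this ⊢
        rw [show i0 + (a + 1) = i0 + 1 + a by omega, show i + (a + 1) = i + 1 + a by omega]
        exact this

theorem fst_mem {A : Type} (k : ℕ) (hk : 2 ≤ k) (T : Set (BTile A k))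
    (P : Picture (A × BTile A k)) (hP : P ∈ SLTLang 2 (downTiles k T)) :
    P.map Prod.fst ∈ SLTLang k T := by
  rw [mem_SLT]
  intro i j hi hj
  have hPr := P.rows_pos
  have hPc := P.cols_pos
  replace hi : i + k ≤ max (P.rows + 2) k := hi
  replace hj : j + k ≤ max (P.cols + 2) k := hj
  obtain ⟨q, hq, i0, j0, h1, h2, h3⟩ := down_match k T P hP i j (by omega) (by omega)
  have hqr := q.rows_pos
  have hqc := q.cols_pos
  -- non-border positions agree
  have hne : ∀ c d : ℕ, c < 2 → d < 2 →
      ((1 ≤ i + c ∧ i + c ≤ P.rows ∧ 1 ≤ j + d ∧ j + d ≤ P.cols) ↔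
       (1 ≤ i0 + c ∧ i0 + c ≤ q.rows ∧ 1 ≤ j0 + d ∧ j0 + d ≤ q.cols)) := by
    intro c d hc hd
    rw [← bpix_ne_none, ← bpix_ne_none, h3 c d hc hd, bpix_decor]
    simp
  have n00 := hne 0 0 (by omega) (by omega)
  have n01 := hne 0 1 (by omega) (by omega)
  have n10 := hne 1 0 (by omega) (by omega)
  have n11 := hne 1 1 (by omega) (by omega)
  have hi0 : i = 0 ↔ i0 = 0 := by omega
  have hj0 : j = 0 ↔ j0 = 0 := by omega
  have key : ∀ a b : ℕ, a < k → b < k →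
      (P.map Prod.fst).bpix (i + a) (j + b) = q.bpix (i0 + a) (j0 + b) := by
    intro a b ha hb
    obtain ⟨c, hc, hc1, hc2⟩ : ∃ c < 2, (1 ≤ i + c ∧ i + c ≤ P.rows) ∧ (c = 1 → i = 0) := by
      by_cases h : i = 0
      · exact ⟨1, by omega, by omega, by omega⟩
      · exact ⟨0, by omega, by omega, by omega⟩
    obtain ⟨d, hd, hd1, hd2⟩ : ∃ d < 2, (1 ≤ j + d ∧ j + d ≤ P.cols) ∧ (d = 1 → j = 0) := by
      by_cases h : j = 0
      · exact ⟨1, by omega, by omega, by omega⟩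
      · exact ⟨0, by omega, by omega, by omega⟩
    by_cases hab : c ≤ a ∧ d ≤ b
    · have hs := (bpix_ne_none P (i + c) (j + d)).2 ⟨hc1.1, hc1.2, hd1.1, hd1.2⟩
      obtain ⟨w, hw⟩ := Option.ne_none_iff_exists'.1 hs
      have e1 := window_eq k T P hP _ (a - c) (b - d) rfl (by omega) (by omega) _ _ w hw
      have e2 := (decor_some k q _ _ w ((h3 c d hc hd).symm.trans hw)).2
        ⟨a - c, by omega⟩ ⟨b - d, by omega⟩
      rw [e1] at e2
      dsimp only at e2
      rw [show i + c + (a - c) = i + a by omega, show j + d + (b - d) = j + b by omega,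
        show i0 + c + (a - c) = i0 + a by omega, show j0 + d + (b - d) = j0 + b by omega] at e2
      exact e2
    · rw [bpix_map, (bpix_eq_none _ _ _).2 (by omega), (bpix_eq_none _ _ _).2 (by omega)]
      rfl
  have hpos : ∀ a b : ℕ, a < k → b < k →
      ((1 ≤ i + a ∧ i + a ≤ P.rows ∧ 1 ≤ j + b ∧ j + b ≤ P.cols) →
       (1 ≤ i0 + a ∧ i0 + a ≤ q.rows ∧ 1 ≤ j0 + b ∧ j0 + b ≤ q.cols)) := by
    intro a b ha hb h
    rw [← bpix_ne_none, ← key a b ha hb, bpix_ne_none]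
    exact h
  have hbr : i0 + k ≤ max (q.rows + 2) k := by
    by_cases h : i = 0
    · omega
    · by_cases h' : j = 0
      · have := hpos (k - 2) 1 (by omega) (by omega) (by omega)
        omega
      · have := hpos (k - 2) 0 (by omega) (by omega) (by omega)
        omega
  have hbc : j0 + k ≤ max (q.cols + 2) k := by
    by_cases h : j = 0
    · omega
    · by_cases h' : i = 0
      · have := hpos 1 (k - 2) (by omega) (by omega) (by omega)
        omega
      · have := hpos 0 (k - 2) (by omega) (by omega) (by omega)
        omega
  have hfin := (mem_SLT k T q).1 hq i0 j0 hbr hbc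
  have heq : (fun a b : Fin k => (P.map Prod.fst).bpix (i + (a : ℕ)) (j + (b : ℕ))) =
      (fun a b : Fin k => q.bpix (i0 + (a : ℕ)) (j0 + (b : ℕ))) := by
    funext a b
    exact key a b a.2 b.2
  rw [heq]
  exact hfin

/-- For every `k ≥ 2`, the family of languages recognized by `k`-tiling
systems coincides with the family REC of languages recognized by ordinary
(2-tile) tiling systems. -/
theorem kRec_eq_REC :
    ∀ k : ℕ, 2 ≤ k →
      ∀ (Sig : Type) (_ : Fintype Sig), kRec Sig k = kRec Sig 2 := by
  intro k hk Sig _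
  ext R
  constructor
  · rintro ⟨Gam, hG, T, π, rfl⟩
    refine ⟨Gam × BTile Gam k, Fintype.ofFinite _, downTiles k T, π ∘ Prod.fst, ?_⟩
    ext r
    constructor
    · rintro ⟨q, hq, rfl⟩
      exact ⟨decor k q, decor_mem k T q hq, rfl⟩
    · rintro ⟨P, hP, rfl⟩
      exact ⟨P.map Prod.fst, fst_mem k hk T P hP, rfl⟩
  · rintro ⟨Gam, hG, T, π, rfl⟩
    exact ⟨Gam, hG, upTiles k T, π, by rw [SLT_upTiles k hk T]⟩
end

section
/- Let k ≥ 3, let Y_hor, Y_vert ⊆ Λ^k be comma-free word codes of length k, and let w ∈ {t,f}^k be an obligation word. Then the picture code X ⊆ Λ^{k,k} consisting of all k×k pictures whose first column is a word of Y_vert and whose i-th row is a word of Y_hor for every position i with w_i = t is a comma-free picture code. -/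
/-- A square picture of size `k × k` over `A` (no border symbol). -/
abbrev SqTile (A : Type) (k : ℕ) := Fin k → Fin k → A

/-- `x` occurs as a contiguous `k × k` subpicture of `p` with top-left
corner at position (i,j) (0-based). -/
def hasSqAt {A : Type} {k : ℕ} (p : Picture A) (i j : ℕ) (x : SqTile A k) : Prop :=
  ∀ a b : Fin k, p.pget (i + (a : ℕ)) (j + (b : ℕ)) = some (x a b)

/-- `X^{++}` : the pictures tessellated by an `r × c` grid (`r, c ≥ 1`) of
pictures of `X`. -/
def gridLang {A : Type} (k : ℕ) (X : Set (SqTile A k)) : Set (Picture A) :=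
  { p | k ∣ p.rows ∧ k ∣ p.cols ∧
      ∀ i j : ℕ, i * k + k ≤ p.rows → j * k + k ≤ p.cols →
        ∃ x ∈ X, hasSqAt p (i * k) (j * k) x }

/-- A comma-free picture code: no element of `X` occurs as an internal
`k × k` subpicture of any picture of `X^{2,2}` (the pictures of `gridLang`
of size `2k × 2k`). A subpicture at (i,j) is internal when its cells meet
neither the first nor the last row, and neither the first nor the last
column. -/
def IsCommaFree {A : Type} (k : ℕ) (X : Set (SqTile A k)) : Prop :=
  ∀ p : Picture A, p.rows = 2 * k → p.cols = 2 * k → p ∈ gridLang k X →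
    ∀ (i j : ℕ) (x : SqTile A k), x ∈ X → hasSqAt p i j x →
      ¬(1 ≤ i ∧ i + k < p.rows ∧ 1 ≤ j ∧ j + k < p.cols)

/-- The concatenation of two words of length `k` (as functions), read at
position `n` (0-based); `none` beyond position `2k - 1`. -/
def wordCat {A : Type} {k : ℕ} (u v : Fin k → A) (n : ℕ) : Option A :=
  if h : n < k then some (u ⟨n, h⟩)
  else if h2 : n < 2 * k then some (v ⟨n - k, by omega⟩)
  else none

/-- A comma-free word code of length `k`: no word of `Y` occurs as a factor
of a concatenation of two words of `Y` at a proper internal position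
(equivalently `Y² ∩ yYz = ∅` for all nonempty words `y, z`). -/
def IsCFWordCode {A : Type} (k : ℕ) (Y : Set (Fin k → A)) : Prop :=
  ∀ u ∈ Y, ∀ v ∈ Y, ∀ x ∈ Y, ∀ i : ℕ, 1 ≤ i → i < k →
    ¬(∀ a : Fin k, wordCat u v (i + (a : ℕ)) = some (x a))

/-- An obligation word `w ∈ {t, f}^k` (`t = true`): for every cyclic
rotation of `w` there is a position where both `w` and the rotation carry
`t`. -/
def IsObligation {k : ℕ} (w : Fin k → Bool) : Prop :=
  ∀ r : Fin k, ∃ i : Fin k, w i = true ∧ w (i + r) = true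

/-- Given comma-free word codes `Y_hor, Y_vert` of length `k ≥ 3` and an
obligation word `w`, the set of all `k × k` pictures whose first column is
a word of `Y_vert` and whose `i`-th row is a word of `Y_hor` for every
position `i` with `w i = t` is a comma-free picture code. -/
theorem commaFree_family :
    ∀ k : ℕ, ∀ hk : 3 ≤ k, ∀ (Lam : Type) (Yhor Yvert : Set (Fin k → Lam)),
      IsCFWordCode k Yhor → IsCFWordCode k Yvert →
      ∀ w : Fin k → Bool, IsObligation w →
      IsCommaFree k
        { x : SqTile Lam k |
          (fun i => x i ⟨0, by omega⟩) ∈ Yvert ∧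
          ∀ i : Fin k, w i = true → (fun j => x i j) ∈ Yhor } := by
  intro k hk Lam Yhor Yvert hH _ w hw p hr hc hp i j x hx hsq hint
  obtain ⟨hi1, hi2, hj1, hj2⟩ := hint
  obtain ⟨_, _, hgrid⟩ := hp
  have hik : i < k := by omega
  have hjk : j < k := by omega
  obtain ⟨a, ha, hai⟩ := hw ⟨i, hik⟩
  have hval : ((a + ⟨i, hik⟩ : Fin k) : ℕ) = (a.val + i) % k := by
    rw [Fin.val_add]
  obtain ⟨c, hck⟩ : ∃ c : Fin k, c = a + ⟨i, hik⟩ := ⟨_, rfl⟩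
  rw [← hck] at hai hval
  have hak := a.isLt
  -- the block row containing the global row `i + a`
  obtain ⟨I, hI, hIc⟩ : ∃ I : ℕ, I * k + k ≤ 2 * k ∧ I * k + c.val = i + a.val := by
    by_cases h : a.val + i < k
    · refine ⟨0, by omega, ?_⟩
      rw [hval, Nat.mod_eq_of_lt h]; omega
    · refine ⟨1, by omega, ?_⟩
      rw [hval, Nat.mod_eq_sub_mod (by omega), Nat.mod_eq_of_lt (by omega)]; omega
  obtain ⟨u, hu, hus⟩ := hgrid I 0 (by omega) (by omega)
  obtain ⟨v, hv, hvs⟩ := hgrid I 1 (by omega) (by omega)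
  refine hH _ (hu.2 c hai) _ (hv.2 c hai) _ (hx.2 a ha) j hj1 hjk ?_
  intro b
  have hb := b.isLt
  have e := hsq a b
  rw [← e, ← hIc]
  unfold wordCat
  by_cases h : j + b.val < k
  · rw [dif_pos h]
    have := hus c ⟨j + b.val, h⟩
    simpa using this.symm
  · rw [dif_neg h, dif_pos (by omega)]
    have := hvs c ⟨j + b.val - k, by omega⟩
    rw [← this]
    congr 1
    simp only
    omega
end

section
/- For every prime number k ≥ 3, there exists a comma-free picture code X ⊆ {0,1}^{k,k} whose cardinality satisfies |X| ≥ 2^{k²−k} / (k+1)^{2√k}. -/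
/-- Finset of rows with zeros in all columns satisfying `P`. -/
def zeroRows (k : ℕ) (P : Fin k → Prop) [DecidablePred P] : Finset (Fin k → Bool) :=
  Fintype.piFinset (fun j => if P j then {false} else Finset.univ)

theorem mem_zeroRows {k : ℕ} (P : Fin k → Prop) [DecidablePred P] (w : Fin k → Bool) :
    w ∈ zeroRows k P ↔ ∀ j, P j → w j = false := by
  unfold zeroRows
  rw [Fintype.mem_piFinset]
  refine forall_congr' fun j => ?_
  by_cases h : P j <;> simp [h]

theorem card_zeroRows {k : ℕ} (P : Fin k → Prop) [DecidablePred P] :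
    (zeroRows k P).card = 2 ^ (Finset.univ.filter (fun j => ¬ P j)).card := by
  unfold zeroRows
  rw [Fintype.card_piFinset, ← Finset.prod_const, Finset.prod_filter]
  refine Finset.prod_congr rfl fun j _ => ?_
  by_cases h : P j <;> simp [h]

/-- Admissible non-first rows. -/
def goodRows (n : ℕ) : Finset (Fin (2 * n + 1) → Bool) :=
  (zeroRows (2 * n + 1) (fun j => (j : ℕ) ≤ n) ∪ zeroRows (2 * n + 1) (fun j => n ≤ (j : ℕ)))ᶜ

theorem card_goodRows (n : ℕ) : 2 ^ (2 * n + 1) ≤ (goodRows n).card + 2 * 2 ^ n := by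
  have h1 : (zeroRows (2 * n + 1) (fun j => (j : ℕ) ≤ n)).card ≤ 2 ^ n := by
    rw [card_zeroRows]
    refine Nat.pow_le_pow_right (by norm_num) ?_
    have : (Finset.univ.filter (fun j : Fin (2 * n + 1) => ¬ (j : ℕ) ≤ n)).card
        ≤ (Finset.Ioc n (2 * n)).card := by
      refine Finset.card_le_card_of_injOn (fun j => (j : ℕ)) ?_ (fun a _ b _ h => Fin.ext h)
      intro j hj
      have := j.2
      simp at hj ⊢
      omega
    simp only [Nat.card_Ioc] at this
    omega
  have h2 : (zeroRows (2 * n + 1) (fun j => n ≤ (j : ℕ))).card ≤ 2 ^ n := by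
    rw [card_zeroRows]
    refine Nat.pow_le_pow_right (by norm_num) ?_
    have : (Finset.univ.filter (fun j : Fin (2 * n + 1) => ¬ n ≤ (j : ℕ))).card
        ≤ (Finset.range n).card := by
      refine Finset.card_le_card_of_injOn (fun j => (j : ℕ)) ?_ (fun a _ b _ h => Fin.ext h)
      intro j hj
      simp at hj ⊢
      omega
    simpa using this
  have h3 := Finset.card_union_le (zeroRows (2 * n + 1) (fun j => (j : ℕ) ≤ n))
    (zeroRows (2 * n + 1) (fun j => n ≤ (j : ℕ)))
  have h4 := Finset.card_compl_add_card (zeroRows (2 * n + 1) (fun j => (j : ℕ) ≤ n) ∪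
    zeroRows (2 * n + 1) (fun j => n ≤ (j : ℕ)))
  simp only [Fintype.card_fun, Fintype.card_bool, Fintype.card_fin] at h4
  unfold goodRows
  omega

/-- The code. -/
def codeF (n : ℕ) : Finset (SqTile Bool (2 * n + 1)) :=
  Fintype.piFinset (fun i => if i = 0 then {fun _ => false} else goodRows n)

theorem card_codeF (n : ℕ) : (codeF n).card = (goodRows n).card ^ (2 * n) := by
  unfold codeF
  rw [Fintype.card_piFinset, Fin.prod_univ_succ]
  simp [Fin.succ_ne_zero]

theorem codeF_commaFree (n : ℕ) : IsCommaFree (2 * n + 1) (codeF n : Set (SqTile Bool (2 * n + 1))) := by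
  intro p hr hc hp i j x hx hat ⟨hi, hi', hj, hj'⟩
  obtain ⟨-, -, hg⟩ := hp
  obtain ⟨y, hy, hya⟩ := hg 0 0 (by omega) (by omega)
  obtain ⟨z, hz, hza⟩ := hg 0 1 (by omega) (by omega)
  simp only [Finset.mem_coe, codeF, Fintype.mem_piFinset] at hx hy hz
  have hx0 := hx 0
  simp only [if_true, Finset.mem_singleton] at hx0
  have hik : i < 2 * n + 1 := by omega
  have hne : (⟨i, hik⟩ : Fin (2 * n + 1)) ≠ 0 := by
    intro h
    have := congrArg Fin.val h
    simp at this
    omega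
  have hy1 := hy ⟨i, hik⟩
  have hz1 := hz ⟨i, hik⟩
  simp only [if_neg hne, goodRows, Finset.mem_compl, Finset.mem_union, mem_zeroRows, not_or]
    at hy1 hz1
  by_cases hjn : j ≤ n
  · refine hy1.2 fun c hcn => ?_
    have e1 := hya ⟨i, hik⟩ c
    have e2 := hat 0 ⟨c - j, by omega⟩
    rw [hx0] at e2
    have a1 : 0 * (2 * n + 1) + (c : ℕ) = j + (c - j) := by omega
    simp only [a1] at e1
    simp only [Fin.val_zero, zero_mul, zero_add, add_zero] at e1 e2
    rw [e1] at e2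
    exact Option.some.inj e2
  · refine hz1.1 fun c hcn => ?_
    have e1 := hza ⟨i, hik⟩ c
    have e2 := hat 0 ⟨c + (2 * n + 1) - j, by omega⟩
    rw [hx0] at e2
    have a1 : 1 * (2 * n + 1) + (c : ℕ) = j + (c + (2 * n + 1) - j) := by omega
    simp only [a1] at e1
    simp only [Fin.val_zero, zero_mul, zero_add, add_zero] at e1 e2
    rw [e1] at e2
    exact Option.some.inj e2

theorem card_codeF_real (n : ℕ) (hn : 1 ≤ n) :
    (2 : ℝ) ^ ((2 * n + 1) * (2 * n)) / 4 ≤ ((codeF n).card : ℝ) := by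
  have h1 : (2 : ℝ) ^ (2 * n + 1) ≤ (goodRows n).card + 2 * 2 ^ n := by
    exact_mod_cast card_goodRows n
  have hp : (0 : ℝ) < 2 ^ n := by positivity
  have hinv : ((2 : ℝ) ^ n)⁻¹ ≤ 1 := inv_le_one_of_one_le₀ (one_le_pow₀ (by norm_num))
  have h2 : (2 : ℝ) ^ (2 * n + 1) * (1 - ((2 : ℝ) ^ n)⁻¹) ≤ (goodRows n).card := by
    have : (2 : ℝ) ^ (2 * n + 1) * (1 - ((2 : ℝ) ^ n)⁻¹) = 2 ^ (2 * n + 1) - 2 * 2 ^ n := by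
      rw [pow_succ, two_mul n, pow_add]
      field_simp
    linarith
  have hb := one_add_mul_le_pow (a := -((2 : ℝ) ^ n)⁻¹) (by linarith) n
  have hn2 : (n : ℝ) * ((2 : ℝ) ^ n)⁻¹ ≤ 1 / 2 := by
    obtain ⟨m, rfl⟩ : ∃ m, n = m + 1 := ⟨n - 1, by omega⟩
    have : m + 1 ≤ 2 ^ m := Nat.lt_two_pow_self
    have h' : ((m + 1 : ℕ) : ℝ) ≤ 2 ^ m := by exact_mod_cast this
    rw [← div_eq_mul_inv, div_le_iff₀ hp, pow_succ]
    linarith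
  have hhalf : (1 : ℝ) / 2 ≤ (1 - ((2 : ℝ) ^ n)⁻¹) ^ n := by
    rw [sub_eq_add_neg]
    linarith
  have hq : (1 : ℝ) / 4 ≤ (1 - ((2 : ℝ) ^ n)⁻¹) ^ (2 * n) := by
    rw [mul_comm 2 n, pow_mul]
    nlinarith
  rw [card_codeF, Nat.cast_pow]
  calc (2 : ℝ) ^ ((2 * n + 1) * (2 * n)) / 4
      = 2 ^ ((2 * n + 1) * (2 * n)) * (1 / 4) := by ring
    _ ≤ 2 ^ ((2 * n + 1) * (2 * n)) * (1 - ((2 : ℝ) ^ n)⁻¹) ^ (2 * n) := by gcongr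
    _ = ((2 : ℝ) ^ (2 * n + 1) * (1 - ((2 : ℝ) ^ n)⁻¹)) ^ (2 * n) := by
        rw [mul_pow, ← pow_mul]
    _ ≤ _ := by
        refine pow_le_pow_left₀ (mul_nonneg (by positivity) (by linarith)) h2 _

/-- For every prime `k ≥ 3` there is a binary comma-free picture code of
size `k × k` with at least `2^(k² - k) / (k+1)^(2√k)` code-pictures. -/
theorem commaFree_numerosity :
    ∀ k : ℕ, Nat.Prime k → 3 ≤ k →
      ∃ X : Set (SqTile Bool k), IsCommaFree k X ∧
        (2 : ℝ) ^ ((k : ℝ) ^ 2 - (k : ℝ)) / ((k : ℝ) + 1) ^ (2 * Real.sqrt (k : ℝ))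
          ≤ (X.ncard : ℝ) := by
  intro k hk hk3
  obtain ⟨n, rfl⟩ : ∃ n, k = 2 * n + 1 := by
    rcases hk.eq_two_or_odd' with h | h
    · omega
    · exact h
  refine ⟨(codeF n : Set (SqTile Bool (2 * n + 1))), codeF_commaFree n, ?_⟩
  rw [Set.ncard_coe_finset]
  refine le_trans ?_ (card_codeF_real n (by omega))
  have e : ((2 * n + 1 : ℕ) : ℝ) ^ 2 - ((2 * n + 1 : ℕ) : ℝ)
      = (((2 * n + 1) * (2 * n) : ℕ) : ℝ) := by
    push_cast
    ring
  rw [e, Real.rpow_natCast]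
  have h3 : (3 : ℝ) ≤ ((2 * n + 1 : ℕ) : ℝ) := by exact_mod_cast hk3
  refine div_le_div_of_nonneg_left (by positivity) (by norm_num) ?_
  have hs : (1 : ℝ) ≤ Real.sqrt ((2 * n + 1 : ℕ) : ℝ) := by
    rw [Real.one_le_sqrt]
    linarith
  calc (4 : ℝ) ≤ ((2 * n + 1 : ℕ) : ℝ) + 1 := by linarith
    _ = (((2 * n + 1 : ℕ) : ℝ) + 1) ^ (1 : ℝ) := (Real.rpow_one _).symm
    _ ≤ _ := Real.rpow_le_rpow_of_exponent_le (by linarith) (by linarith)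
end

section
/- For every integer m ≥ 2 there exist a prime number k with 4·log₂ m ≤ k ≤ 8·log₂ m and a comma-free picture code X ⊆ {0,1}^{k,k} such that |X| ≥ m^k. -/
/-- Tiles whose odd rows vanish and whose even rows start with `true`. -/
def codeTile (t : ℕ) (f : Fin (t + 1) → Fin (2 * t) → Bool) : SqTile Bool (2 * t + 1) :=
  fun a b =>
    if (a : ℕ) % 2 = 1 then false
    else if h : (b : ℕ) = 0 then true
    else f ⟨(a : ℕ) / 2, by omega⟩ ⟨(b : ℕ) - 1, by omega⟩

theorem codeTile_injective (t : ℕ) : Function.Injective (codeTile t) := by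
  intro f g hfg
  funext a b
  have h := congrFun (congrFun hfg ⟨2 * a, by omega⟩) ⟨b + 1, by omega⟩
  simpa [codeTile] using h

theorem codeTile_commaFree (t : ℕ) (ht : 1 ≤ t) :
    IsCommaFree (2 * t + 1) (Set.range (codeTile t)) := by
  rintro p hr hc ⟨-, -, hg⟩ i j x ⟨f, rfl⟩ hx ⟨hi, hi', hj, hj'⟩
  obtain ⟨_, ⟨g1, rfl⟩, h1⟩ := hg 0 1 (by omega) (by omega)
  obtain ⟨_, ⟨g2, rfl⟩, h2⟩ := hg 1 1 (by omega) (by omega)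
  have e1 := h1 ⟨2 * t, by omega⟩ ⟨0, by omega⟩
  have e2 := h2 ⟨0, by omega⟩ ⟨0, by omega⟩
  have x1 := hx ⟨2 * t - i, by omega⟩ ⟨2 * t + 1 - j, by omega⟩
  have x2 := hx ⟨2 * t + 1 - i, by omega⟩ ⟨2 * t + 1 - j, by omega⟩
  have a1 : i + (2 * t - i) = 2 * t := by omega
  have a2 : i + (2 * t + 1 - i) = 2 * t + 1 := by omega
  have a3 : j + (2 * t + 1 - j) = 2 * t + 1 := by omega
  simp only [a1, a2, a3, zero_mul, one_mul, zero_add, add_zero] at e1 e2 x1 x2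
  rw [e1] at x1
  rw [e2] at x2
  rcases Nat.mod_two_eq_zero_or_one i with h | h
  · have : (2 * t + 1 - i) % 2 = 1 := by omega
    simp [codeTile, this] at x2
  · have : (2 * t - i) % 2 = 1 := by omega
    simp [codeTile, this] at x1

theorem codeTile_ncard (t : ℕ) :
    (Set.range (codeTile t)).ncard = 2 ^ (2 * t * (t + 1)) := by
  rw [← Set.image_univ, Set.ncard_image_of_injective _ (codeTile_injective t), Set.ncard_univ]
  simp [Nat.card_eq_fintype_card, pow_mul]

/-- For every `m ≥ 2` there are a prime `k` with
`4·log₂ m ≤ k ≤ 8·log₂ m` and a binary comma-free picture code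
`X ⊆ {0,1}^{k,k}` with `|X| ≥ m^k`. -/
theorem commaFree_enough :
    ∀ m : ℕ, 2 ≤ m →
      ∃ k : ℕ, Nat.Prime k ∧
        4 * Real.logb 2 (m : ℝ) ≤ (k : ℝ) ∧ (k : ℝ) ≤ 8 * Real.logb 2 (m : ℝ) ∧
        ∃ X : Set (SqTile Bool k), IsCommaFree k X ∧ m ^ k ≤ X.ncard := by
  intro m hm
  have hm0 : (0 : ℝ) < m := by positivity
  have hL : 1 ≤ Real.logb 2 (m : ℝ) := by
    rw [Real.le_logb_iff_rpow_le (by norm_num) hm0]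
    simpa using (by exact_mod_cast hm : (2 : ℝ) ≤ m)
  set L := Real.logb 2 (m : ℝ) with hLdef
  have hc : 4 ≤ ⌈4 * L⌉₊ := by
    have := Nat.le_ceil (4 * L)
    have h4 : (4 : ℝ) ≤ (⌈4 * L⌉₊ : ℝ) := by linarith
    exact_mod_cast h4
  obtain ⟨n, hn⟩ : ∃ n, ⌈4 * L⌉₊ = n + 1 := ⟨⌈4 * L⌉₊ - 1, by omega⟩
  obtain ⟨k, hk, hk1, hk2⟩ := Nat.exists_prime_lt_and_le_two_mul n (by omega)
  have hlow : 4 * L ≤ (k : ℝ) := by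
    refine (Nat.le_ceil (4 * L)).trans ?_
    exact_mod_cast (by omega : ⌈4 * L⌉₊ ≤ k)
  have hnL : (n : ℝ) < 4 * L := Nat.lt_ceil.mp (by omega)
  have hup : (k : ℝ) ≤ 8 * L := by
    have : (k : ℝ) ≤ 2 * n := by exact_mod_cast hk2
    linarith
  obtain ⟨t, rfl⟩ : Odd k := hk.odd_of_ne_two (by omega)
  refine ⟨2 * t + 1, hk, hlow, hup, Set.range (codeTile t), codeTile_commaFree t (by omega), ?_⟩
  rw [codeTile_ncard]
  have hm4 : m ^ 4 ≤ 2 ^ (2 * t + 1) := by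
    have h1 : Real.logb 2 ((m : ℝ) ^ 4) ≤ ((2 * t + 1 : ℕ) : ℝ) := by
      rw [Real.logb_pow]
      exact_mod_cast hlow
    rw [Real.logb_le_iff_le_rpow (by norm_num) (by positivity), Real.rpow_natCast] at h1
    exact_mod_cast h1
  refine (Nat.pow_le_pow_iff_left (n := 4) (by norm_num)).mp ?_
  calc (m ^ (2 * t + 1)) ^ 4 = (m ^ 4) ^ (2 * t + 1) := by rw [← pow_mul, ← pow_mul, mul_comm]
    _ ≤ (2 ^ (2 * t + 1)) ^ (2 * t + 1) := Nat.pow_le_pow_left hm4 _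
    _ = 2 ^ ((2 * t + 1) * (2 * t + 1)) := by rw [← pow_mul]
    _ ≤ 2 ^ (2 * t * (t + 1) * 4) := Nat.pow_le_pow_right (by norm_num) (by nlinarith)
    _ = (2 ^ (2 * t * (t + 1))) ^ 4 := by rw [pow_mul]
end

section
/- Let k ≥ 3 and let q be an integer with 1 ≤ q < k/2. Then the word w ∈ {t,f}^k defined by w_i = t if and only if (1 ≤ i ≤ q) or (q < i ≤ k and q divides i) is an obligation word. -/
/-- For `k ≥ 3` and `1 ≤ q < k/2`, the word `w ∈ {t,f}^k` whose (1-based)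
position `i` carries `t` iff `1 ≤ i ≤ q`, or `q < i ≤ k` and `q ∣ i`, is an
obligation word.  (Positions of `Fin k` are 0-based, so position `i : Fin k`
corresponds to the 1-based position `i + 1`.) -/
theorem obligation_word_construction :
    ∀ k q : ℕ, 3 ≤ k → 1 ≤ q → 2 * q < k →
      IsObligation (fun i : Fin k =>
        decide ((i : ℕ) + 1 ≤ q ∨ (q < (i : ℕ) + 1 ∧ q ∣ (i : ℕ) + 1))) := by
  intro k q hk hq hqk r
  have hr := r.isLt
  by_cases h : (r : ℕ) + q ≤ k
  · have hm : (r : ℕ) % q < q := Nat.mod_lt _ hq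
    have hd := Nat.div_add_mod (r : ℕ) q
    refine ⟨⟨q - 1 - (r : ℕ) % q, by omega⟩, ?_, ?_⟩
    · simp only [decide_eq_true_eq]
      left
      omega
    · simp only [decide_eq_true_eq, Fin.val_add]
      rw [Nat.mod_eq_of_lt (by omega)]
      have hdiv : q ∣ q - 1 - (r : ℕ) % q + (r : ℕ) + 1 := by
        refine ⟨(r : ℕ) / q + 1, ?_⟩
        rw [Nat.mul_add, Nat.mul_one]
        omega
      rcases Nat.lt_or_ge q (q - 1 - (r : ℕ) % q + (r : ℕ) + 1) with h1 | h1
      · exact Or.inr ⟨h1, hdiv⟩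
      · exact Or.inl h1
  · refine ⟨⟨k - (r : ℕ), by omega⟩, ?_, ?_⟩
    · simp only [decide_eq_true_eq]
      left
      omega
    · simp only [decide_eq_true_eq, Fin.val_add]
      left
      rw [Nat.sub_add_cancel hr.le, Nat.mod_self]
      omega
end

section
/- Let k ≥ 2, let R ⊆ Σ^{++} be tiling recognizable, and let the padded language R^(k) over Σ_$ = Σ ∪ {$} be recognized by the tiling system (Σ_$, Γ, T, π). Then there exist a finite alphabet B whose elements are pairs (f(r), π(r)) ∈ Γ^{4k} × Σ_$^{k,k} for r ranging over the k×k subpictures occurring in the k-tessellations of pictures of L(T) (f(r) being the frame of r), a set M of 2-tiles over B ∪ {#}, and a picture morphism π_k mapping each element (f(r), π(r)) of B to the k×k picture π(r), such that R^(k) = π_k(L(M)), where L(M) is the local language over B defined by M. -/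
/-- The image of a picture language `L ⊆ Γ^{++}` under the picture morphism
sending each letter `γ` to the `k × k` picture `φ γ`, assembled in a grid:
a picture `q` is in the image iff it is obtained from some `p ∈ L` by
replacing each pixel of `p` by its `k × k` code-picture. -/
def encodedLang {Gam Lam : Type} (k : ℕ) (φ : Gam → SqTile Lam k)
    (L : Set (Picture Gam)) : Set (Picture Lam) :=
  { q | ∃ p ∈ L, q.rows = p.rows * k ∧ q.cols = p.cols * k ∧
      ∀ (i j : ℕ) (hi : i < p.rows) (hj : j < p.cols),
        hasSqAt q (i * k) (j * k) (φ (p.pix ⟨i, hi⟩ ⟨j, hj⟩)) }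

/-- The padded language `R^(k)` over `Σ ∪ {$}` (the padding symbol `$`
being `none`): each picture of `R` is extended with between 1 and `k`
columns of `$` on the right and between 1 and `k` rows of `$` at the
bottom, so that both sides of the result are multiples of `k`. -/
def padded {Sig : Type} (k : ℕ) (R : Set (Picture Sig)) :
    Set (Picture (Option Sig)) :=
  { q | ∃ p ∈ R,
      p.rows < q.rows ∧ q.rows ≤ p.rows + k ∧
      p.cols < q.cols ∧ q.cols ≤ p.cols + k ∧
      k ∣ q.rows ∧ k ∣ q.cols ∧
      ∀ i j : ℕ, i < q.rows → j < q.cols → q.pget i j = some (p.pget i j) }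

/-- The frame of a `k × k` picture: the quadruple
(first row, last column, last row, first column). -/
def frameOf {Gam : Type} {k : ℕ} (hk : 0 < k) (r : SqTile Gam k) :
    (Fin k → Gam) × (Fin k → Gam) × (Fin k → Gam) × (Fin k → Gam) :=
  (fun j => r ⟨0, hk⟩ j,
   fun i => r i ⟨k - 1, by omega⟩,
   fun j => r ⟨k - 1, by omega⟩ j,
   fun i => r i ⟨0, hk⟩)

namespace FrameProof

theorem pos_of {k : ℕ} (hk : 2 ≤ k) : 0 < k := Nat.lt_of_lt_of_le Nat.zero_lt_two hk

/-- The alphabet of pairs (frame, projected block). -/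
abbrev BB {Sig Gam : Type} (k : ℕ) (hk : 2 ≤ k) (T : Set (BTile Gam 2))
    (π : Gam → Option Sig) : Type :=
  { b : ((Fin k → Gam) × (Fin k → Gam) × (Fin k → Gam) × (Fin k → Gam))
          × SqTile (Option Sig) k //
    ∃ r : SqTile Gam k,
      (∃ p ∈ SLTLang 2 T, ∃ i j : ℕ, k ∣ i ∧ k ∣ j ∧ hasSqAt p i j r) ∧
      b = (frameOf (pos_of hk) r, fun a c => π (r a c)) }

/-- `P` is the picture of (frame, projection) letters of the tessellation of `p`. -/
def IsEnc {Sig Gam : Type} {k : ℕ} {hk : 2 ≤ k} {T : Set (BTile Gam 2)}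
    {π : Gam → Option Sig} (p : Picture Gam) (P : Picture (BB k hk T π)) : Prop :=
  p.rows = P.rows * k ∧ p.cols = P.cols * k ∧
  ∀ (i j : ℕ) (hi : i < P.rows) (hj : j < P.cols), ∃ r : SqTile Gam k,
    (∃ p ∈ SLTLang 2 T, ∃ i j : ℕ, k ∣ i ∧ k ∣ j ∧ hasSqAt p i j r) ∧
    hasSqAt p (i * k) (j * k) r ∧
    (P.pix ⟨i, hi⟩ ⟨j, hj⟩).val = (frameOf (pos_of hk) r, fun a c => π (r a c))

/-- Reading a frame at position `(a, c)`. -/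
def fget {Gam : Type} {k : ℕ}
    (f : (Fin k → Gam) × (Fin k → Gam) × (Fin k → Gam) × (Fin k → Gam)) (a c : Fin k) : Gam :=
  if a.val = 0 then f.1 c else if a.val = k - 1 then f.2.2.1 c
  else if c.val = 0 then f.2.2.2 a else f.2.1 a

theorem fget_frameOf {Gam : Type} {k : ℕ} (hk : 0 < k) (r : SqTile Gam k) (a c : Fin k)
    (h : a.val = 0 ∨ a.val = k - 1 ∨ c.val = 0 ∨ c.val = k - 1) :
    fget (frameOf hk r) a c = r a c := by
  unfold fget frameOf
  split_ifs with h1 h2 h3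
  · exact congrFun (congrArg r (Fin.ext h1.symm)) c
  · exact congrFun (congrArg r (Fin.ext h2.symm)) c
  · exact congrArg (r a) (Fin.ext h3.symm)
  · refine congrArg (r a) (Fin.ext ?_)
    simp only; omega

theorem bpix_succ {A : Type} (p : Picture A) (i j : ℕ) :
    p.bpix (i + 1) (j + 1) = p.pget i j := by
  unfold Picture.bpix Picture.pget
  by_cases h : i < p.rows ∧ j < p.cols
  · rw [dif_pos h, dif_pos (by omega)]; rfl
  · rw [dif_neg h, dif_neg (by omega)]

theorem bpix_none {A : Type} (p : Picture A) (i j : ℕ)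
    (h : ¬ (1 ≤ i ∧ i ≤ p.rows ∧ 1 ≤ j ∧ j ≤ p.cols)) : p.bpix i j = none := dif_neg h

theorem bpix_some {A : Type} (p : Picture A) (i j : ℕ)
    (h : p.bpix i j ≠ none) : 1 ≤ i ∧ i ≤ p.rows ∧ 1 ≤ j ∧ j ≤ p.cols := by
  by_contra h'
  exact h (bpix_none p i j h')

theorem bpix_ne {A : Type} (p : Picture A) (i j : ℕ)
    (h : 1 ≤ i ∧ i ≤ p.rows ∧ 1 ≤ j ∧ j ≤ p.cols) : p.bpix i j ≠ none := by
  unfold Picture.bpix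
  rw [dif_pos h]; simp

/-- Pixel of the bordered picture at block index `(I, J)`, offset `(a, c)`. -/
theorem enc_bpix {Sig Gam : Type} {k : ℕ} {hk : 2 ≤ k} {T : Set (BTile Gam 2)}
    {π : Gam → Option Sig} {p : Picture Gam} {P : Picture (BB k hk T π)} (h : IsEnc p P)
    (x y I J : ℕ) (a c : Fin k) (hx : x + k = I * k + a + 1) (hy : y + k = J * k + c + 1)
    (hf : a.val = 0 ∨ a.val = k - 1 ∨ c.val = 0 ∨ c.val = k - 1) :
    p.bpix x y = (P.bpix I J).map (fun b => fget b.val.1 a c) := by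
  obtain ⟨hr, hc, h⟩ := h
  have ha := a.isLt
  have hc' := c.isLt
  rcases I with _ | I
  · rw [bpix_none p _ _ (by omega), bpix_none P _ _ (by omega)]; rfl
  rcases J with _ | J
  · rw [bpix_none p _ _ (by omega), bpix_none P _ _ (by omega)]; rfl
  have ex : x = (I * k + a) + 1 := by rw [Nat.succ_mul] at hx; omega
  have ey : y = (J * k + c) + 1 := by rw [Nat.succ_mul] at hy; omega
  subst ex ey
  rw [bpix_succ, bpix_succ]
  by_cases hin : I < P.rows ∧ J < P.cols
  · obtain ⟨r, -, h2, h3⟩ := h I J hin.1 hin.2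
    rw [h2 a c]
    unfold Picture.pget
    rw [dif_pos hin, Option.map_some, h3, fget_frameOf _ _ _ _ hf]
  · have : ¬ (I * k + a < p.rows ∧ J * k + c < p.cols) := by
      rw [hr, hc]
      rintro ⟨u, v⟩
      apply hin
      constructor
      · by_contra hh
        have := Nat.mul_le_mul_right k (not_lt.mp hh); omega
      · by_contra hh
        have := Nat.mul_le_mul_right k (not_lt.mp hh); omega
    unfold Picture.pget
    rw [dif_neg this, dif_neg hin]; rfl

/-- The tile set: all tiles occurring in encodings of pictures of `L(T)`. -/
def MM {Sig Gam : Type} (k : ℕ) (hk : 2 ≤ k) (T : Set (BTile Gam 2))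
    (π : Gam → Option Sig) : Set (BTile (BB k hk T π) 2) :=
  { t | ∃ p ∈ SLTLang 2 T, ∃ P : Picture (BB k hk T π), IsEnc p P ∧ t ∈ tilesOf 2 P }

theorem exists_block (k : ℕ) (hk : 2 ≤ k) (i : ℕ) :
    ∃ (I : ℕ) (a : Fin k), i + k = I * k + a + 1 := by
  refine ⟨(i + k - 1) / k, ⟨(i + k - 1) % k, Nat.mod_lt _ (by omega)⟩, ?_⟩
  have := Nat.div_add_mod (i + k - 1) k
  rw [Nat.mul_comm] at this
  simp only; omega

theorem next_block (k : ℕ) (hk : 2 ≤ k) (i I : ℕ) (a : Fin k) (h : i + k = I * k + a + 1)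
    (u : Fin 2) :
    ∃ (d : Fin 2) (a' : Fin k), (∀ i' I' : ℕ, i' + k = I' * k + a + 1 →
        i' + u + k = (I' + d) * k + a' + 1) ∧
      (a.val = k - 1 → a'.val = 0 ∨ a'.val = k - 1) := by
  have ha := a.isLt
  by_cases hu : u.val = 0
  · refine ⟨0, a, ?_, ?_⟩
    · intro i' I' h'; simp [hu, h']
    · intro h; right; exact h
  have hu1 : u.val = 1 := by omega
  by_cases hw : a.val = k - 1
  · refine ⟨1, ⟨0, by omega⟩, ?_, ?_⟩
    · intro i' I' h'
      simp only [Fin.val_one, Nat.succ_mul, hu1]; omega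
    · intro _; left; rfl
  · refine ⟨0, ⟨a + 1, by omega⟩, ?_, ?_⟩
    · intro i' I' h'
      simp [hu1]; omega
    · intro h; exact absurd h hw

set_option maxHeartbeats 1000000 in
theorem back {Sig Gam : Type} {k : ℕ} {hk : 2 ≤ k} {T : Set (BTile Gam 2)}
    {π : Gam → Option Sig} {q : Picture Gam} {P : Picture (BB k hk T π)} (h : IsEnc q P)
    (hP : P ∈ SLTLang 2 (MM k hk T π)) : q ∈ SLTLang 2 T := by
  rintro t ⟨i, j, hi, hj, ht⟩
  have hr := h.1
  have hc := h.2.1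
  have hi' : i ≤ P.rows * k := by unfold borderRows at hi; omega
  have hj' : j ≤ P.cols * k := by unfold borderCols at hj; omega
  obtain ⟨I, a, ha⟩ := exists_block k hk i
  obtain ⟨J, c, hc⟩ := exists_block k hk j
  have hal := a.isLt
  have hcl := c.isLt
  have hI : I ≤ P.rows := by
    by_contra hh
    have := Nat.mul_le_mul_right k (Nat.succ_le_of_lt (not_le.mp hh))
    rw [Nat.succ_mul] at this; omega
  have hJ : J ≤ P.cols := by
    by_contra hh
    have := Nat.mul_le_mul_right k (Nat.succ_le_of_lt (not_le.mp hh))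
    rw [Nat.succ_mul] at this; omega
  have hI1 : a.val ≠ k - 1 → 1 ≤ I := by
    intro hh
    by_contra h0
    have : I = 0 := by omega
    subst this; omega
  have hJ1 : c.val ≠ k - 1 → 1 ≤ J := by
    intro hh
    by_contra h0
    have : J = 0 := by omega
    subst this; omega
  by_cases hw : a.val = k - 1 ∨ c.val = k - 1
  · -- the tile crosses a block boundary
    obtain ⟨p, hp, P', hE, I', J', hI', hJ', hPP0⟩ :=
      hP (show (fun u v : Fin 2 => P.bpix (I + u) (J + v)) ∈ tilesOf 2 P from
        ⟨I, J, by unfold borderRows; omega, by unfold borderCols; omega, fun _ _ => rfl⟩)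
    have hPP : ∀ u v : Fin 2, P.bpix (I + u) (J + v) = P'.bpix (I' + u) (J' + v) := hPP0
    have hI'2 : I' ≤ P'.rows := by unfold borderRows at hI'; omega
    have hJ'2 : J' ≤ P'.cols := by unfold borderCols at hJ'; omega
    have hI'1 : k ≤ I' * k + a + 1 := by
      by_cases hh : a.val = k - 1
      · omega
      have := hI1 hh
      have hpos := P.cols_pos
      have : 1 ≤ I' := by
        by_cases hJ0 : J = 0
        · have := hPP 0 1
          have hne := bpix_ne P (I + (0 : Fin 2)) (J + (1 : Fin 2)) (by simp; omega)
          rw [this] at hne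
          simpa using (bpix_some _ _ _ hne).1
        · have := hPP 0 0
          have hne := bpix_ne P (I + (0 : Fin 2)) (J + (0 : Fin 2)) (by simp; omega)
          rw [this] at hne
          simpa using (bpix_some _ _ _ hne).1
      have := Nat.mul_le_mul_right k this
      omega
    have hJ'1 : k ≤ J' * k + c + 1 := by
      by_cases hh : c.val = k - 1
      · omega
      have := hJ1 hh
      have hpos := P.rows_pos
      have : 1 ≤ J' := by
        by_cases hI0 : I = 0
        · have := hPP 1 0
          have hne := bpix_ne P (I + (1 : Fin 2)) (J + (0 : Fin 2)) (by simp; omega)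
          rw [this] at hne
          simpa using (bpix_some _ _ _ hne).2.2.1
        · have := hPP 0 0
          have hne := bpix_ne P (I + (0 : Fin 2)) (J + (0 : Fin 2)) (by simp; omega)
          rw [this] at hne
          simpa using (bpix_some _ _ _ hne).2.2.1
      have := Nat.mul_le_mul_right k this
      omega
    have hx : (I' * k + a + 1 - k) + k = I' * k + a + 1 := by omega
    have hy : (J' * k + c + 1 - k) + k = J' * k + c + 1 := by omega
    apply hp
    refine ⟨I' * k + a + 1 - k, J' * k + c + 1 - k, ?_, ?_, ?_⟩
    · have := Nat.mul_le_mul_right k hI'2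
      unfold borderRows; rw [hE.1]; omega
    · have := Nat.mul_le_mul_right k hJ'2
      unfold borderCols; rw [hE.2.1]; omega
    · intro u v
      rw [ht u v]
      obtain ⟨d, a', hd, hda⟩ := next_block k hk i I a ha u
      obtain ⟨e, c', he, hec⟩ := next_block k hk j J c hc v
      have hfr : a'.val = 0 ∨ a'.val = k - 1 ∨ c'.val = 0 ∨ c'.val = k - 1 := by
        rcases hw with hw | hw
        · have := hda hw; tauto
        · have := hec hw; tauto
      rw [enc_bpix h _ _ _ _ a' c' (hd _ _ ha) (he _ _ hc) hfr,
        enc_bpix hE _ _ _ _ a' c' (hd _ _ hx) (he _ _ hy) hfr]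
      exact congrArg _ (hPP d e)
  · -- the tile lies inside a block
    push Not at hw
    have h1 := hI1 hw.1
    have h2 := hJ1 hw.2
    obtain ⟨I, rfl⟩ : ∃ I0, I = I0 + 1 := ⟨I - 1, by omega⟩
    obtain ⟨J, rfl⟩ : ∃ J0, J = J0 + 1 := ⟨J - 1, by omega⟩
    obtain ⟨r, ⟨p, hp, i0, j0, -, -, hpr⟩, hqr, -⟩ := h.2.2 I J (by omega) (by omega)
    rw [Nat.succ_mul] at ha hc
    have hlast := hpr ⟨a + 1, by omega⟩ ⟨c + 1, by omega⟩
    have hb : i0 + (a + 1) < p.rows ∧ j0 + (c + 1) < p.cols := by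
      by_contra hb
      unfold Picture.pget at hlast
      rw [dif_neg hb] at hlast
      exact absurd hlast (by simp)
    apply hp
    refine ⟨i0 + a + 1, j0 + c + 1, by unfold borderRows; omega, by unfold borderCols; omega, ?_⟩
    intro u v
    rw [ht u v]
    have hu := u.isLt
    have hv := v.isLt
    have e1 : i + u = (I * k + (a + u)) + 1 := by omega
    have e2 : j + v = (J * k + (c + v)) + 1 := by omega
    have e3 : i0 + a + 1 + u = (i0 + (a + u)) + 1 := by omega
    have e4 : j0 + c + 1 + v = (j0 + (c + v)) + 1 := by omega
    rw [e1, e2, e3, e4, bpix_succ, bpix_succ]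
    rw [hqr ⟨a + u, by omega⟩ ⟨c + v, by omega⟩, hpr ⟨a + u, by omega⟩ ⟨c + v, by omega⟩]

theorem pget_some {A : Type} (p : Picture A) (i j : ℕ) (x : A) (h : p.pget i j = some x)
    (hi : i < p.rows) (hj : j < p.cols) : p.pix ⟨i, hi⟩ ⟨j, hj⟩ = x := by
  unfold Picture.pget at h
  rw [dif_pos ⟨hi, hj⟩] at h
  exact Option.some.inj h

theorem pget_pos {A : Type} (p : Picture A) (i j : ℕ) (hi : i < p.rows) (hj : j < p.cols) :
    p.pget i j = some (p.pix ⟨i, hi⟩ ⟨j, hj⟩) := dif_pos ⟨hi, hj⟩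

theorem blk_lt {k n i a : ℕ} (hi : i < n) (ha : a < k) : i * k + a < n * k := by
  have := Nat.mul_le_mul_right k (Nat.succ_le_of_lt hi)
  rw [Nat.succ_mul] at this; omega

/-- Every picture of `L(T)` with sides multiples of `k` has an encoding. -/
theorem exists_enc {Sig Gam : Type} {k : ℕ} (hk : 2 ≤ k) {T : Set (BTile Gam 2)}
    (π : Gam → Option Sig) {p : Picture Gam} (hp : p ∈ SLTLang 2 T)
    (hr : k ∣ p.rows) (hc : k ∣ p.cols) :
    ∃ P : Picture (BB k hk T π), IsEnc p P := by
  obtain ⟨n, hn⟩ := hr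
  obtain ⟨m, hm⟩ := hc
  rw [Nat.mul_comm] at hn hm
  have hrp := p.rows_pos
  have hcp := p.cols_pos
  let r : Fin n → Fin m → SqTile Gam k := fun i j a c =>
    p.pix ⟨i * k + a, hn ▸ blk_lt i.isLt a.isLt⟩ ⟨j * k + c, hm ▸ blk_lt j.isLt c.isLt⟩
  have hsq : ∀ i j, hasSqAt p (i.val * k) (j.val * k) (r i j) := fun i j a c =>
    pget_pos p _ _ _ _
  have hocc : ∀ i j, ∃ p ∈ SLTLang 2 T, ∃ i' j' : ℕ, k ∣ i' ∧ k ∣ j' ∧ hasSqAt p i' j' (r i j) :=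
    fun i j => ⟨p, hp, _, _, Dvd.intro_left _ rfl, Dvd.intro_left _ rfl, hsq i j⟩
  refine ⟨⟨n, m, ?_, ?_, fun i j => ⟨(frameOf (pos_of hk) (r i j), fun a c => π (r i j a c)),
    r i j, hocc i j, rfl⟩⟩, hn, hm, ?_⟩
  · rcases Nat.eq_zero_or_pos n with rfl | h
    · omega
    · exact h
  · rcases Nat.eq_zero_or_pos m with rfl | h
    · omega
    · exact h
  · intro i j hi hj
    exact ⟨r ⟨i, hi⟩ ⟨j, hj⟩, hocc _ _, hsq ⟨i, hi⟩ ⟨j, hj⟩, rfl⟩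

end FrameProof

/-- Let `k ≥ 2`, let `R ⊆ Σ^{++}` be tiling recognizable and let the padded
language `R^(k)` over `Σ_$ = Σ ∪ {$}` be recognized by the tiling system
`(Σ_$, Γ, T, π)`.  Then there is a set `M` of 2-tiles over the alphabet
`B ∪ {#}`, where `B` consists of the pairs `(f(r), π(r))` for `r` ranging
over the `k × k` blocks occurring in the `k`-tessellations of the pictures
of `L(T)` (with `f(r)` the frame of `r`), such that `R^(k)` is the image of
the local language `L(M)` under the picture morphism `π_k` sending each
letter `(f(r), π(r))` of `B` to the `k × k` picture `π(r)`. -/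
theorem padded_as_morphic_image_of_local_over_frames :
    ∀ (Sig : Type) (_ : Fintype Sig) (R : Set (Picture Sig)),
      (∃ (G0 : Type) (_ : Fintype G0) (T0 : Set (BTile G0 2)) (π0 : G0 → Sig),
        R = Picture.map π0 '' SLTLang 2 T0) →
      ∀ (k : ℕ) (hk : 2 ≤ k)
        (Gam : Type) (_ : Fintype Gam) (T : Set (BTile Gam 2))
        (π : Gam → Option Sig),
        padded k R = Picture.map π '' SLTLang 2 T →
        ∃ M : Set (BTile
            { b : ((Fin k → Gam) × (Fin k → Gam) × (Fin k → Gam) × (Fin k → Gam))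
                    × SqTile (Option Sig) k //
              ∃ r : SqTile Gam k,
                (∃ p ∈ SLTLang 2 T, ∃ i j : ℕ, k ∣ i ∧ k ∣ j ∧ hasSqAt p i j r) ∧
                b = (frameOf (by omega) r, fun a c => π (r a c)) } 2),
          padded k R = encodedLang k (fun b => b.val.2) (SLTLang 2 M) := by
  intro Sig _ R _ k hk Gam _ T π hpad
  refine ⟨FrameProof.MM k hk T π, ?_⟩
  apply Set.Subset.antisymm
  · intro s hs
    obtain ⟨p0, hp0, -, -, -, -, hdr, hdc, -⟩ := id hs
    rw [hpad] at hs
    obtain ⟨p, hp, rfl⟩ := hs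
    obtain ⟨P, hP⟩ := FrameProof.exists_enc hk π hp hdr hdc
    refine ⟨P, fun t ht => ⟨p, hp, P, hP, ht⟩, hP.1, hP.2.1, ?_⟩
    intro i j hi hj
    obtain ⟨r, -, h2, h3⟩ := hP.2.2 i j hi hj
    intro a c
    have ha : i * k + a < p.rows := hP.1 ▸ FrameProof.blk_lt hi a.isLt
    have hc : j * k + c < p.cols := hP.2.1 ▸ FrameProof.blk_lt hj c.isLt
    have e := FrameProof.pget_some p _ _ _ (h2 a c) ha hc
    rw [FrameProof.pget_pos (Picture.map π p) (i * k + a) (j * k + c) ha hc]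
    simp only [h3]
    rw [← e]; rfl
  · rintro s ⟨P, hP, hr, hc, hs⟩
    rw [hpad]
    have hk0 : 0 < k := by omega
    let ρ : FrameProof.BB k hk T π → SqTile Gam k := fun b => Classical.choose b.2
    have hρ : ∀ b : FrameProof.BB k hk T π,
        (∃ p ∈ SLTLang 2 T, ∃ i j : ℕ, k ∣ i ∧ k ∣ j ∧ hasSqAt p i j (ρ b)) ∧
          b.1 = (frameOf (FrameProof.pos_of hk) (ρ b), fun a c => π (ρ b a c)) :=
      fun b => Classical.choose_spec b.2
    have hdi : ∀ i, i < s.rows → i / k < P.rows := fun i hi =>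
      Nat.div_lt_of_lt_mul (by rw [Nat.mul_comm, ← hr]; exact hi)
    have hdj : ∀ i, i < s.cols → i / k < P.cols := fun i hi =>
      Nat.div_lt_of_lt_mul (by rw [Nat.mul_comm, ← hc]; exact hi)
    let q : Picture Gam := ⟨s.rows, s.cols, s.rows_pos, s.cols_pos, fun i j =>
      ρ (P.pix ⟨i / k, hdi i i.isLt⟩ ⟨j / k, hdj j j.isLt⟩)
        ⟨i % k, Nat.mod_lt _ hk0⟩ ⟨j % k, Nat.mod_lt _ hk0⟩⟩
    have hq : FrameProof.IsEnc (hk := hk) q P := by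
      refine ⟨hr, hc, ?_⟩
      intro i j hi hj
      refine ⟨ρ (P.pix ⟨i, hi⟩ ⟨j, hj⟩), (hρ _).1, ?_, (hρ _).2⟩
      intro a c
      have ha : i * k + a < q.rows := hr ▸ FrameProof.blk_lt hi a.isLt
      have hc : j * k + c < q.cols := hc ▸ FrameProof.blk_lt hj c.isLt
      rw [FrameProof.pget_pos q _ _ ha hc]
      have e : ∀ (i : ℕ) (a : Fin k), (i * k + a) / k = i ∧ (i * k + a) % k = a := by
        intro i a
        constructor
        · rw [Nat.mul_comm, Nat.mul_add_div hk0, Nat.div_eq_of_lt a.isLt, Nat.add_zero]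
        · rw [Nat.mul_comm, Nat.mul_add_mod, Nat.mod_eq_of_lt a.isLt]
      simp only [q, e]
    refine ⟨q, FrameProof.back hq hP, ?_⟩
    have hpix : ∀ i j, π (q.pix i j) = s.pix i j := by
      intro i j
      have h1 := hs (i / k) (j / k) (hdi i i.isLt) (hdj j j.isLt)
        ⟨i % k, Nat.mod_lt _ hk0⟩ ⟨j % k, Nat.mod_lt _ hk0⟩
      simp only [Nat.div_add_mod'] at h1
      have h2 := FrameProof.pget_some s _ _ _ h1 i.isLt j.isLt
      rw [(hρ _).2] at h2
      exact h2.symm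
    unfold Picture.map
    have : (fun i j => π (q.pix i j)) = s.pix := by
      funext i j; exact hpix i j
    rw [this]
end
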